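/- Let u := Σₖ₌₀¹¹ (−η)ᵏ ∈ A_𝒪 (note −1 = ω³, so u is the image of Σₖ₌₀¹¹ (ω³η)ᵏ). Then ψ(u, u) = 72, and u is divisible by 2θ in A_𝒪; consequently u = 2θ·z for an element z ∈ A_𝒪 with ψ(z, z) = 6 (a 6-vector of A_𝒪). -/

import Mathlib

open Polynomial

noncomputable section

/-- The Eisenstein ring `𝒪 = ℤ[ω]`, where `ω = e^{2πi/6}` is a primitive sixth root of
unity (so `ω² - ω + 1 = 0`), presented as `ℤ[X]/(X² - X + 1)`. -/
abbrev O : Type := AdjoinRoot (X ^ 2 - X + 1 : ℤ[X])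

/-- `ω`, the distinguished primitive sixth root of unity in `𝒪`. -/
def ω : O := AdjoinRoot.root _

lemma ω_sq : ω ^ 2 - ω + 1 = 0 := by
  have h := AdjoinRoot.eval₂_root (X ^ 2 - X + 1 : ℤ[X])
  simpa [ω, eval₂_add, eval₂_sub, eval₂_pow, eval₂_X, eval₂_one] using h

/-- Complex conjugation on the Eisenstein ring: the ring involution with
`conj ω = 1 - ω = ω⁻¹`. -/
def conj : O →+* O :=
  AdjoinRoot.lift (algebraMap ℤ O) (1 - ω) (by
    have h := ω_sq
    simp only [eval₂_add, eval₂_sub, eval₂_pow, eval₂_X, eval₂_one]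
    ring_nf
    ring_nf at h
    linear_combination h)

/-- `θ := ω - ω⁻¹ = ω - conj ω = 2ω - 1`, a square root of `-3` in `𝒪`. -/
def θ : O := ω - conj ω

/-- `𝒪[η]/(η¹² − 1)`, modelled as coefficient vectors with respect to the 𝒪-basis
`1, η, η², …, η¹¹`. -/
abbrev B12 : Type := Fin 12 → O

/-- The monomial `ηᵃ` as an element of `𝒪[η]/(η¹² − 1)`. -/
def ηpow (a : Fin 12) : B12 := Pi.single a 1

/-- Multiplication by `η` on `𝒪[η]/(η¹² − 1)`: the cyclic shift of coefficients. -/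
def S (x : B12) : B12 := fun a => x (a - 1)

/-- The coefficient function `F` of the Hermitian form `ψ₀`: `F(0) = 3`,
`F(11) = −1 − ω`, `F(1) = −1 − ω⁻¹` (note `ω⁻¹ = ω⁵`), and `F(k) = 0` otherwise. -/
def F12 : Fin 12 → O := fun k =>
  if k = 0 then 3 else if k = 11 then -1 - ω else if k = 1 then -1 - ω ^ 5 else 0

/-- The Hermitian form `ψ₀` on `𝒪[η]/(η¹² − 1)`: 𝒪-linear in the first variable,
conjugate-linear in the second, with `ψ₀(ηᵃ, ηᵇ) = F(a − b mod 12)`. -/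
def psi0 (x y : B12) : O := ∑ a : Fin 12, ∑ b : Fin 12, x a * conj (y b) * F12 (a - b)

/-- `Σᵢ₌₀¹¹ ηⁱ`. -/
def σ₁ : B12 := fun _ => 1

/-- `Σᵢ₌₀¹¹ (ωη)ⁱ`. -/
def σ₂ : B12 := fun a => ω ^ (a : ℕ)

/-- The 𝒪-submodule of `𝒪[η]/(η¹² − 1)` underlying the ideal `(h)`, where
`h = (η¹² − 1)/((η − 1)(η − ω⁻¹))`.  Indeed `(h) = (Σηⁱ, Σ(ωη)ⁱ)` (both generators are
multiples of `h`, and `h` is an 𝒪[η]-combination of them since `ω⁻¹ − 1` is a unit),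
and as an 𝒪-module this ideal is spanned by `Σηⁱ` and `Σ(ωη)ⁱ` alone, because
`η·Σηⁱ = Σηⁱ` and `η·Σ(ωη)ⁱ = ω⁻¹·Σ(ωη)ⁱ`. -/
def N : Submodule O B12 := Submodule.span O {σ₁, σ₂}

/-- `A_𝒪 = 𝒪[η]/(h)`, a free 𝒪-module of rank 10. -/
abbrev A12 : Type := B12 ⧸ N

/-- The quotient map `𝒪[η]/(η¹² − 1) → A_𝒪`. -/
def mkA : B12 → A12 := Submodule.Quotient.mk

/-- The image `s_i` in `A_𝒪` of `(ω²η)^i`, for `i = 1, …, 10` (indexed by `Fin 10`,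
so `sB i` is `s_{i+1}`). -/
def sB (i : Fin 10) : A12 :=
  mkA (ω ^ (2 * ((i : ℕ) + 1)) • ηpow (Fin.castLE (by omega) i.succ))

/-!
For a twelfth root of unity `ζ ∈ 𝒪` of norm one, `k ↦ ζᵏ` is a character of `ℤ/12`, so the
convolution form `ψ₀` takes the value `12 · Σₖ ζᵏ F(k)` at `Σ (ζη)ᵏ`. At `ζ = -1` this is
`12 · 6 = 72`.

For divisibility, `u` may be replaced by `u + θ Σ ηᵏ + 2 Σ (ωη)ᵏ`, which has the same class in
`A_𝒪`. Its coefficients `(-1)ᵏ + θ + 2ωᵏ` vanish modulo `2`, where `1 + θ = 2ω`, and modulo `θ`,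
where `ω ≡ -1` and `3 = -θ²`. As `2` and `θ` are coprime, they are all divisible by `2θ`. Finally
`72 = |2θ|² ψ(z, z) = 12 ψ(z, z)`, and `𝒪` is torsion-free.
-/

lemma conj_ω : conj ω = 1 - ω :=
  AdjoinRoot.lift_root _

lemma θ_eq : θ = 2 * ω - 1 := by
  rw [θ, conj_ω]
  ring

lemma θ_sq : θ ^ 2 = -3 := by
  rw [θ_eq]
  linear_combination 4 * ω_sq

lemma conj_θ : conj θ = -θ := by
  simp only [θ_eq, map_sub, map_mul, map_ofNat, map_one, conj_ω]
  ring

lemma ω_pow_five : ω ^ 5 = 1 - ω := by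
  linear_combination (ω ^ 3 + ω ^ 2 - 1) * ω_sq

instance : Module.IsTorsionFree ℤ O :=
  have : (X ^ 2 - X + 1 : ℤ[X]).Monic := by monicity!
  have := this.free_adjoinRoot
  inferInstance

lemma isCoprime_two_θ : IsCoprime 2 θ :=
  ⟨2, θ, by linear_combination θ_sq⟩

lemma two_dvd_neg_one_pow_add_θ (n : ℕ) : 2 ∣ (-1) ^ n + θ := by
  rcases neg_one_pow_eq_or O n with h | h <;> rw [h, θ_eq]
  · exact ⟨ω, by ring⟩
  · exact ⟨ω - 1, by ring⟩

lemma θ_dvd_neg_one_pow_add_two_mul_ω_pow (n : ℕ) : θ ∣ (-1) ^ n + 2 * ω ^ n := by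
  have ω_congr : θ ∣ ω - -1 := ⟨1 - ω, by rw [θ_eq]; linear_combination 2 * ω_sq⟩
  have pow_congr : θ ∣ ω ^ n - (-1) ^ n := ω_congr.trans (sub_dvd_pow_sub_pow ω (-1) n)
  have three_dvd : θ ∣ 3 := ⟨-θ, by linear_combination θ_sq⟩
  convert dvd_add (pow_congr.mul_left 2) (three_dvd.mul_right ((-1) ^ n)) using 1
  ring

lemma two_mul_θ_dvd (n : ℕ) : 2 * θ ∣ (-1) ^ n + θ + 2 * ω ^ n := by
  refine isCoprime_two_θ.mul_dvd ?_ ?_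
  · exact dvd_add (two_dvd_neg_one_pow_add_θ n) (dvd_mul_right 2 _)
  · rw [add_right_comm]
    exact dvd_add (θ_dvd_neg_one_pow_add_two_mul_ω_pow n) dvd_rfl

lemma psi0_smul_smul (c d : O) (x y : B12) :
    psi0 (c • x) (d • y) = c * conj d * psi0 x y := by
  simp only [psi0, Finset.mul_sum, Pi.smul_apply, smul_eq_mul, map_mul]
  refine Finset.sum_congr rfl fun a _ => Finset.sum_congr rfl fun b _ => ?_
  ring

lemma psi0_two_mul_θ_smul (x y : B12) :
    psi0 ((2 * θ) • x) ((2 * θ) • y) = 12 * psi0 x y := by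
  rw [psi0_smul_smul, map_mul, map_ofNat, conj_θ]
  linear_combination -4 * psi0 x y * θ_sq

/-- The element `Σᵢ₌₀¹¹ (ζη)ⁱ` of `𝒪[η]/(η¹² − 1)`, as its vector of coefficients `ζⁱ`. It is an
eigenvector of multiplication by `η` when `ζ¹² = 1`. -/
def twistedSum (ζ : O) : B12 := fun a => ζ ^ (a : ℕ)

section TwistedSum

variable {ζ : O}

lemma twistedSum_add (hζ : ζ ^ 12 = 1) (a b : Fin 12) :
    twistedSum ζ (a + b) = twistedSum ζ a * twistedSum ζ b := by
  simp only [twistedSum, Fin.val_add, ← pow_add]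
  exact (pow_eq_pow_mod _ hζ).symm

lemma twistedSum_mul_conj (hζ : ζ * conj ζ = 1) (a : Fin 12) :
    twistedSum ζ a * conj (twistedSum ζ a) = 1 := by
  rw [twistedSum, map_pow, ← mul_pow, hζ, one_pow]

lemma conj_twistedSum_sub (hζ : ζ ^ 12 = 1) (hζ' : ζ * conj ζ = 1) (a k : Fin 12) :
    conj (twistedSum ζ (a - k)) = conj (twistedSum ζ a) * twistedSum ζ k := by
  have h : twistedSum ζ a = twistedSum ζ (a - k) * twistedSum ζ k := by
    rw [← twistedSum_add hζ, sub_add_cancel]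
  rw [h, map_mul, mul_assoc, mul_comm (conj _) (twistedSum ζ k), twistedSum_mul_conj hζ', mul_one]

lemma psi0_twistedSum_right (hζ : ζ ^ 12 = 1) (hζ' : ζ * conj ζ = 1) (x : B12) :
    psi0 x (twistedSum ζ) =
      (∑ a, x a * conj (twistedSum ζ a)) * ∑ k, twistedSum ζ k * F12 k := by
  rw [psi0, Finset.sum_mul_sum]
  refine Finset.sum_congr rfl fun a _ => ?_
  rw [← (Equiv.subLeft a).sum_comp]
  refine Finset.sum_congr rfl fun k _ => ?_
  rw [Equiv.subLeft_apply, sub_sub_cancel, conj_twistedSum_sub hζ hζ']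
  ring

lemma psi0_twistedSum_self (hζ : ζ ^ 12 = 1) (hζ' : ζ * conj ζ = 1) :
    psi0 (twistedSum ζ) (twistedSum ζ) = 12 * ∑ k, twistedSum ζ k * F12 k := by
  simp only [psi0_twistedSum_right hζ hζ', twistedSum_mul_conj hζ', Finset.sum_const,
    Finset.card_univ, Fintype.card_fin, nsmul_eq_mul, Nat.cast_ofNat, mul_one]

end TwistedSum

lemma sum_mul_F12 (x : B12) :
    ∑ k, x k * F12 k = 3 * x 0 - (1 + ω) * x 11 - (1 + ω ^ 5) * x 1 := by
  simp only [F12, mul_ite, mul_zero, Fin.sum_univ_succ, Finset.univ_unique, Finset.sum_singleton,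
    Fin.default_eq_zero, Fin.isValue, Fin.reduceSucc, Fin.succ_zero_eq_one, Fin.succ_one_eq_two,
    Fin.reduceEq, Fin.succ_ne_zero, ↓reduceIte, zero_add]
  ring

lemma sum_twistedSum_neg_one_mul_F12 : ∑ k, twistedSum (-1) k * F12 k = 6 := by
  have at_zero : twistedSum (-1) 0 = 1 := by simp [twistedSum]
  have at_one : twistedSum (-1) 1 = -1 := by simp [twistedSum]
  have at_eleven : twistedSum (-1) 11 = -1 := by norm_num [twistedSum]
  rw [sum_mul_F12, at_zero, at_one, at_eleven, ω_pow_five]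
  ring

lemma psi0_twistedSum_neg_one : psi0 (twistedSum (-1)) (twistedSum (-1)) = 72 := by
  rw [psi0_twistedSum_self (by norm_num) (by simp), sum_twistedSum_neg_one_mul_F12]
  norm_num

lemma exists_twistedSum_neg_one_add_eq_smul :
    ∃ z : B12, twistedSum (-1) + (θ • σ₁ + (2 : O) • σ₂) = (2 * θ) • z := by
  choose z hz using fun a : Fin 12 => two_mul_θ_dvd a
  refine ⟨z, funext fun a => ?_⟩
  simpa [twistedSum, σ₁, σ₂, add_assoc] using hz a

lemma mkA_add_smul_σ₁_add_smul_σ₂ (x : B12) (c d : O) :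
    mkA (x + (c • σ₁ + d • σ₂)) = mkA x := by
  refine (Submodule.Quotient.eq N).2 ?_
  rw [add_sub_cancel_left]
  exact Submodule.mem_span_pair.2 ⟨c, d, rfl⟩

/-- Let `u := Σₖ₌₀¹¹ (−η)ᵏ ∈ A_𝒪` (note `−1 = ω³`).  Then `ψ(u,u) = 72`,
and `u` is divisible by `2θ` in `A_𝒪`: `u = 2θ·z` for some `z ∈ A_𝒪` with `ψ(z,z) = 6`
(a 6-vector of `A_𝒪`). -/
theorem statement17
    (ψA : A12 → A12 → O) (hψA : ∀ x y : B12, ψA (mkA x) (mkA y) = psi0 x y) :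
    let u : A12 := mkA (fun a => (-1 : O) ^ (a : ℕ))
    ψA u u = 72 ∧ ∃ z : A12, u = (2 * θ) • z ∧ ψA z z = 6 := by
  intro u
  have psi_u : ψA u u = 72 := (hψA _ _).trans psi0_twistedSum_neg_one
  obtain ⟨z, hz⟩ := exists_twistedSum_neg_one_add_eq_smul
  have u_eq : u = mkA ((2 * θ) • z) :=
    (mkA_add_smul_σ₁_add_smul_σ₂ _ θ 2).symm.trans (congrArg mkA hz)
  refine ⟨psi_u, mkA z, u_eq, ?_⟩
  have twelve_smul : (12 : ℤ) • ψA (mkA z) (mkA z) = (12 : ℤ) • 6 := by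
    calc (12 : ℤ) • ψA (mkA z) (mkA z) = 12 * psi0 z z := by simp [hψA]
      _ = ψA u u := by rw [u_eq, hψA, psi0_two_mul_θ_smul]
      _ = (12 : ℤ) • 6 := by rw [psi_u]; norm_num
  exact smul_right_injective O (by norm_num : (12 : ℤ) ≠ 0) twelve_smul

end
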